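/- Let G be a finite simple graph with node set N and edge set E, and let P be any MultiSLP equivalent to P_G. Then there exists a MultiSLP Q equivalent to P_G such that: #_M(Q) ≤ #_M(P); every temporal (non-returned) variable of Q is of the form Γ_a ← ρ ⊕ a for some node a ∈ N; and the defining statement of every returned goal variable g of Q has one of the two forms g ← Γ_a ⊕ x (for some node a ∈ N with Γ_a in Q and some constant x) or g ← ρ ⊕ x ⊕ y (for constants x, y). In particular, Q computes every goal without using the XOR-cancellation law. -/

import Mathlib

/-- Terms of a MultiSLP over a set of constants `C`:
either a constant, or a variable referenced by its statement index. -/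
inductive Term (C : Type) where
  | const : C → Term C
  | var : ℕ → Term C
  deriving DecidableEq

/-- A MultiSLP over the constants `C`: a sequence of statements
`v_i ← ⊕(t_{i,1},…,t_{i,n_i})` (statement `i` defines variable `i`, each `n_i ≥ 2`,
and every variable used in statement `i` has index `< i`), followed by a return
list of terms whose variables are all defined. -/
structure MultiSLP (C : Type) where
  stmts : List (List (Term C))
  ret : List (Term C)
  arity : ∀ args ∈ stmts, 2 ≤ args.length
  wfStmts : ∀ i, i < stmts.length → ∀ t ∈ stmts.getD i [], ∀ j, t = Term.var j → j < i
  wfRet : ∀ t ∈ ret, ∀ j, t = Term.var j → j < stmts.length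

/-- The value of a constant `c` is the standard basis vector `e_c` of `GF(2)^C`. -/
def eConst {C : Type} [DecidableEq C] (c : C) : C → ZMod 2 := fun d => if d = c then 1 else 0

/-- Value of a term, given the list of values of the previously defined variables. -/
def Term.eval {C : Type} [DecidableEq C] (env : List (C → ZMod 2)) : Term C → (C → ZMod 2)
  | .const c => eConst c
  | .var j => env.getD j 0

/-- Values of the variables of a MultiSLP: the value of variable `i` is the GF(2)-sum
(XOR) of the values of the arguments of statement `i`. -/
def MultiSLP.envList {C : Type} [DecidableEq C] (P : MultiSLP C) : List (C → ZMod 2) :=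
  P.stmts.foldl (fun env args => env ++ [(args.map (Term.eval env)).sum]) []

/-- The result of a MultiSLP: the tuple of values of its returned terms. -/
def MultiSLP.result {C : Type} [DecidableEq C] (P : MultiSLP C) : List (C → ZMod 2) :=
  P.ret.map (Term.eval P.envList)

/-- The value of variable `i` of a MultiSLP. -/
def MultiSLP.value {C : Type} [DecidableEq C] (P : MultiSLP C) (i : ℕ) : C → ZMod 2 :=
  P.envList.getD i 0

/-- The memory-access cost `#_M(P) = Σ_i (n_i + 1)`. -/
def MultiSLP.costM {C : Type} (P : MultiSLP C) : ℕ :=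
  (P.stmts.map fun args => args.length + 1).sum
/-- The constants used by `P_G`: the fresh constant `ρ`, the nodes of `G`,
and for each node `a` the fresh local nodes `λ_a` and `μ_a`. -/
inductive Const (N : Type) where
  | rho : Const N
  | node : N → Const N
  | lam : N → Const N
  | mu : N → Const N
  deriving DecidableEq

/-- The result of `P_G`: the family of values `e_ρ + e_x + e_y` indexed by the
edges of `G_modif` (first the edges of `G`, enumerated by the list `L`, then for
each node `a` — enumerated by `nodes` — the two local edges `(a,λ_a)` and `(a,μ_a)`).
A MultiSLP `Q` is equivalent to `P_G` iff `Q.result = targetValues L nodes`. -/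
def targetValues {N : Type} [DecidableEq N] (L : List (N × N)) (nodes : List N) :
    List (Const N → ZMod 2) :=
  (L.map fun p =>
    eConst Const.rho + eConst (Const.node p.1) + eConst (Const.node p.2))
  ++ nodes.flatMap fun a =>
      [eConst Const.rho + eConst (Const.node a) + eConst (Const.lam a),
       eConst Const.rho + eConst (Const.node a) + eConst (Const.mu a)]

/-!
Each statement of `P` costs at least 3. If the goal of an edge has only two arguments and `P` has no
`Γ_a` for an end `a` of that edge, then one of the arguments is a temporary that is not a `Γ`:
constants, `Γ`s and goals do not suffice, by a comparison of coordinates. Let `v` be the value of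
such a temporary. The goals that are the sum of `v` and a constant, a `Γ` or an earlier goal all
meet one of two vertices. The goals that are the sum of two such temporaries lie in their span, and
by Gaussian elimination as many vertices as its dimension meet them all. So `t` such temporaries,
which cost at least `3 * t`, are replaced by `3 * t` vertices that meet all the goals in question.

Now compute `Γ_a` for those of these vertices that are nodes of `G`, in addition to the `Γ_a` of
`P`, and nothing else but the goals. A vertex accounts for a cost of 1, and its `Γ_a` costs 3. The
missing 2 come from the goals of the two local edges at `a`, which save 1 each: the vertices are
chosen so that no local edge is accounted for by its node. A vertex that is a local node meets
one edge only, whose goal is computed from three constants at an extra cost of 1.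
-/

section Values

variable {C : Type} [DecidableEq C] {ρ a b c : C} {e e' : Sym2 C}

/-- The value of the variable `Γ_a ← ρ ⊕ a`. -/
def gammaValue (ρ a : C) : C → ZMod 2 := eConst ρ + eConst a

/-- The value `e_ρ + e_x + e_y` of the goal of an edge `s(x, y)`, written as the indicator of
`{ρ, x, y}`; the two agree only if `ρ`, `x`, `y` are distinct, see `goalValue_mk`. -/
def goalValue (ρ : C) (e : Sym2 C) : C → ZMod 2 := fun c => if c = ρ ∨ c ∈ e then 1 else 0

lemma eConst_apply (c d : C) : eConst c d = if d = c then 1 else 0 := rfl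

lemma gammaValue_apply_root (h : a ≠ ρ) : gammaValue ρ a ρ = 1 := by
  simp [gammaValue, eConst_apply, h.symm]

lemma gammaValue_apply_of_ne (h : c ≠ ρ) : gammaValue ρ a c = if c = a then 1 else 0 := by
  simp [gammaValue, eConst_apply, h]

@[simp]
lemma goalValue_apply_root (ρ : C) (e : Sym2 C) : goalValue ρ e ρ = 1 := by
  simp [goalValue]

lemma goalValue_apply_of_ne (h : c ≠ ρ) : goalValue ρ e c = if c ∈ e then 1 else 0 := by
  simp [goalValue, h]

lemma goalValue_mk (ha : ρ ≠ a) (hb : ρ ≠ b) (hab : a ≠ b) :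
    goalValue ρ s(a, b) = eConst ρ + eConst a + eConst b := by
  funext c
  simp only [goalValue, Pi.add_apply, eConst_apply, Sym2.mem_iff]
  grind

lemma goalValue_inj (he : ρ ∉ e) (he' : ρ ∉ e') : goalValue ρ e = goalValue ρ e' ↔ e = e' := by
  refine ⟨fun h => Sym2.ext fun c => ?_, congrArg _⟩
  have hc := congrFun h c
  simp only [goalValue] at hc
  grind

lemma goalValue_ne_eConst (he : ρ ∉ e) (c : C) : goalValue ρ e ≠ eConst c := by
  intro h
  have hρ := congrFun h ρ
  have hx := congrFun h e.out.1
  have hmem := e.out_fst_mem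
  simp only [goalValue, eConst_apply] at hρ hx
  grind

lemma goalValue_ne_gammaValue (he : ρ ∉ e) (hd : ¬ e.IsDiag) (a : C) :
    goalValue ρ e ≠ gammaValue ρ a := by
  induction e with | _ x y
  intro h
  have hx := congrFun h x
  have hy := congrFun h y
  simp only [goalValue, gammaValue, eConst_apply, Pi.add_apply, Sym2.mem_iff,
    Sym2.mk_isDiag_iff] at *
  grind

lemma goalValue_ne_eConst_add_eConst (he : ρ ∉ e) (hd : ¬ e.IsDiag) (c d : C) :
    goalValue ρ e ≠ eConst c + eConst d := by
  induction e with | _ x y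
  intro h
  have hρ := congrFun h ρ
  have hx := congrFun h x
  have hy := congrFun h y
  simp only [goalValue, eConst_apply, Pi.add_apply, Sym2.mem_iff, Sym2.mk_isDiag_iff] at *
  grind

lemma goalValue_ne_goalValue_add_eConst (he : ρ ∉ e) (hd : ¬ e.IsDiag) (he' : ρ ∉ e')
    (hd' : ¬ e'.IsDiag) (c : C) : goalValue ρ e ≠ goalValue ρ e' + eConst c := by
  induction e with | _ x y
  induction e' with | _ x' y'
  intro h
  have hρ := congrFun h ρ
  have hx := congrFun h x
  have hy := congrFun h y
  have hx' := congrFun h x'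
  have hy' := congrFun h y'
  have hc := congrFun h c
  simp only [goalValue, eConst_apply, Pi.add_apply, Sym2.mem_iff, Sym2.mk_isDiag_iff] at *
  grind

lemma mem_of_goalValue_eq_gammaValue_add_eConst (he : ρ ∉ e) (hd : ¬ e.IsDiag)
    (h : goalValue ρ e = gammaValue ρ a + eConst c) : a ∈ e := by
  induction e with | _ x y
  have hx := congrFun h x
  have hy := congrFun h y
  simp only [goalValue, gammaValue, eConst_apply, Pi.add_apply, Sym2.mem_iff,
    Sym2.mk_isDiag_iff] at *
  grind

end Values

section Hitting

variable {C : Type} {ρ : C} {M : Set C} {E : Set (Sym2 C)} {e : Sym2 C} {c : C}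

/-- `E` is the edge set of a loopless graph avoiding `ρ` in which every vertex outside `M` has at
most one edge. For `G_modif`, `M` is the set of nodes of `G`, and the rest are the local nodes. -/
structure IsPendant (ρ : C) (M : Set C) (E : Set (Sym2 C)) : Prop where
  root_notMem : ∀ e ∈ E, ρ ∉ e
  not_isDiag : ∀ e ∈ E, ¬ e.IsDiag
  eq_of_leaf : ∀ c ∉ M, ∀ e ∈ E, ∀ e' ∈ E, c ∈ e → c ∈ e' → e = e'

/-- An anchor of an edge is one of its ends, and a leaf end if there is one. The two local
edges at a node `a` of `G_modif` are thus not counted at `a`, and they can pay for a new `Γ_a`. -/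
def IsAnchor (M : Set C) (e : Sym2 C) (c : C) : Prop :=
  c ∈ e ∧ (c ∈ M → ∀ d ∈ e, d ∈ M)

lemma isAnchor_of_notMem (hc : c ∈ e) (hcM : c ∉ M) : IsAnchor M e c :=
  ⟨hc, fun h => absurd h hcM⟩

lemma isAnchor_of_forall_mem (hc : c ∈ e) (he : ∀ d ∈ e, d ∈ M) : IsAnchor M e c :=
  ⟨hc, fun _ => he⟩

lemma exists_isAnchor (M : Set C) (e : Sym2 C) : ∃ c, IsAnchor M e c := by
  by_cases! h : ∀ d ∈ e, d ∈ M
  · exact ⟨_, isAnchor_of_forall_mem e.out_fst_mem h⟩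
  · obtain ⟨c, hc, hcM⟩ := h
    exact ⟨c, isAnchor_of_notMem hc hcM⟩

/-- Gaussian elimination: a pivot coordinate `c` takes care of all vectors that do not vanish at
`c`, and the remaining ones lie in the smaller subspace `W ⊓ {w | w c = 0}`. -/
lemma exists_card_le_finrank_forall_exists_mem {ι C K : Type*} [Field K] {v : ι → C → K}
    {R : ι → C → Prop} {F : Set ι}
    (hR : ∀ F' ⊆ F, F'.Nonempty →
      ∃ c, (∃ i ∈ F', v i c ≠ 0) ∧ ∀ i ∈ F', v i c ≠ 0 → R i c)
    (W : Submodule K (C → K)) [FiniteDimensional K W] :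
    ∃ X : Finset C, X.card ≤ Module.finrank K W ∧ ∀ i ∈ F, v i ∈ W → ∃ c ∈ X, R i c := by
  classical
  induction hd : Module.finrank K W using Nat.strong_induction_on generalizing W with
  | _ d ih
  by_cases hne : {i ∈ F | v i ∈ W}.Nonempty
  · obtain ⟨c, ⟨i, ⟨-, hiW⟩, hic⟩, hc⟩ := hR _ (Set.sep_subset _ _) hne
    let W' := W ⊓ LinearMap.ker (LinearMap.proj (R := K) (φ := fun _ : C => K) c)
    have hW' : W' < W := inf_lt_left.2 fun h => hic (h hiW)
    have hdim := hd ▸ Submodule.finrank_lt_finrank_of_lt hW'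
    have : FiniteDimensional K W' := Submodule.finiteDimensional_of_le hW'.le
    obtain ⟨X, hXcard, hX⟩ := ih _ hdim W' rfl
    refine ⟨insert c X, (Finset.card_insert_le _ _).trans (by lia), fun j hj hjW => ?_⟩
    by_cases hjc : v j c = 0
    · obtain ⟨d, hd, hjd⟩ := hX j hj ⟨hjW, hjc⟩
      exact ⟨d, Finset.mem_insert_of_mem hd, hjd⟩
    · exact ⟨c, Finset.mem_insert_self _ _, hc j ⟨hj, hjW⟩ hjc⟩
  · exact ⟨∅, by simp, fun i hi hiW => absurd ⟨i, hi, hiW⟩ hne⟩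

lemma exists_card_le_finrank_forall_isAnchor [DecidableEq C] (hE : ∀ e ∈ E, ρ ∉ e)
    (W : Submodule (ZMod 2) (C → ZMod 2)) [FiniteDimensional (ZMod 2) W] :
    ∃ X : Finset C, X.card ≤ Module.finrank (ZMod 2) W ∧
      ∀ e ∈ E, goalValue ρ e ∈ W → ∃ c ∈ X, IsAnchor M e c := by
  refine exists_card_le_finrank_forall_exists_mem (fun F hFE hF => ?_) W
  have mem_iff {e c} (hc : c ≠ ρ) : goalValue ρ e c ≠ 0 ↔ c ∈ e := by
    simp [goalValue_apply_of_ne hc]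
  have ne_root {e c} (he : e ∈ F) (hc : c ∈ e) : c ≠ ρ := by
    rintro rfl
    exact hE e (hFE he) hc
  by_cases! hleaf : ∃ e ∈ F, ∃ c ∈ e, c ∉ M
  · obtain ⟨e, he, c, hc, hcM⟩ := hleaf
    have hcρ := ne_root he hc
    exact ⟨c, ⟨e, he, (mem_iff hcρ).2 hc⟩,
      fun e' _ h => isAnchor_of_notMem ((mem_iff hcρ).1 h) hcM⟩
  · obtain ⟨e, he⟩ := hF
    have hcρ := ne_root he e.out_fst_mem
    exact ⟨_, ⟨e, he, (mem_iff hcρ).2 e.out_fst_mem⟩,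
      fun e' he' h => isAnchor_of_forall_mem ((mem_iff hcρ).1 h) (hleaf e' he')⟩

end Hitting

section Completions

variable {C : Type} [DecidableEq C] {ρ : C} {M : Set C} {E : Set (Sym2 C)} {S : Set C}
  {ord : Sym2 C → ℕ} {e e' q : Sym2 C} {u v w : C → ZMod 2} {c d : C}

/-- The values of those arguments of the statement of the goal of `e` that are constants,
variables `Γ_a` with `a ∈ S`, or goals; `ord` is the position of a goal in the program. -/
inductive IsElementary (ρ : C) (E : Set (Sym2 C)) (S : Set C) (ord : Sym2 C → ℕ) (e : Sym2 C) :
    (C → ZMod 2) → Prop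
  | const (c : C) : IsElementary ρ E S ord e (eConst c)
  | gamma (a : C) (ha : a ∈ S) : IsElementary ρ E S ord e (gammaValue ρ a)
  | goal (e' : Sym2 C) (he' : e' ∈ E) (hlt : ord e' < ord e) :
      IsElementary ρ E S ord e (goalValue ρ e')

/-- A temporary of value `v` completes the edge `e` if `e` has no end in `S` and the goal of `e` is
the sum of `v` and one elementary argument. -/
structure Completes (ρ : C) (E : Set (Sym2 C)) (S : Set C) (ord : Sym2 C → ℕ)
    (v : C → ZMod 2) (e : Sym2 C) : Prop where
  mem : e ∈ E
  notMem_of_mem : ∀ a ∈ S, a ∉ e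
  exists_add : ∃ u, IsElementary ρ E S ord e u ∧ goalValue ρ e = v + u

lemma apply_eq_one_of_notMem (hsum : goalValue ρ q = v + u) (hc : c ≠ ρ) (hcq : c ∉ q)
    (hvc : v c = 1) : u c = 1 := by
  have := congrFun hsum c
  rw [goalValue_apply_of_ne hc, if_neg hcq, Pi.add_apply, hvc] at this
  grind

lemma goalValue_ne_add_of_isElementary (hE : IsPendant ρ M E) (hS : ρ ∉ S) (he : e ∈ E)
    (heS : ∀ a ∈ S, a ∉ e) (hu : IsElementary ρ E S ord e u) (hw : IsElementary ρ E S ord e w) :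
    goalValue ρ e ≠ u + w := by
  have hρ := hE.root_notMem e he
  have hd := hE.not_isDiag e he
  have ne_of_root {u w : C → ZMod 2} (hu : u ρ = 1) (hw : w ρ = 1) : goalValue ρ e ≠ u + w := by
    intro h
    simpa [hu, hw, CharTwo.add_self_eq_zero] using congrFun h ρ
  have gamma_root {a} (ha : a ∈ S) : gammaValue ρ a ρ = 1 :=
    gammaValue_apply_root fun h => hS (h ▸ ha)
  cases hu with
  | const c =>
    cases hw with
    | const d => exact goalValue_ne_eConst_add_eConst hρ hd c d
    | gamma a ha =>
      rw [add_comm]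
      exact fun h => heS a ha (mem_of_goalValue_eq_gammaValue_add_eConst hρ hd h)
    | goal e' he' _ =>
      rw [add_comm]
      exact goalValue_ne_goalValue_add_eConst hρ hd (hE.root_notMem e' he')
        (hE.not_isDiag e' he') c
  | gamma a ha =>
    cases hw with
    | const d => exact fun h => heS a ha (mem_of_goalValue_eq_gammaValue_add_eConst hρ hd h)
    | gamma b hb => exact ne_of_root (gamma_root ha) (gamma_root hb)
    | goal e' _ _ => exact ne_of_root (gamma_root ha) (goalValue_apply_root ρ e')
  | goal e' he' _ =>
    cases hw with
    | const d =>
      exact goalValue_ne_goalValue_add_eConst hρ hd (hE.root_notMem e' he')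
        (hE.not_isDiag e' he') d
    | gamma a ha => exact ne_of_root (goalValue_apply_root ρ e') (gamma_root ha)
    | goal e'' _ _ => exact ne_of_root (goalValue_apply_root ρ e') (goalValue_apply_root ρ e'')

namespace IsElementary

lemma eq_or_mem_or_exists_goal (hu : IsElementary ρ E S ord e u) (hc : c ≠ ρ) (huc : u c = 1) :
    u = eConst c ∨ c ∈ S ∨ ∃ e' ∈ E, c ∈ e' ∧ ord e' < ord e ∧ u = goalValue ρ e' := by
  cases hu with
  | const d => grind [eConst_apply]
  | gamma a ha => grind [gammaValue_apply_of_ne hc (a := a)]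
  | goal e' he' hlt => grind [goalValue_apply_of_ne hc (e := e')]

lemma goal_lt (hE : IsPendant ρ M E) (hq : q ∈ E)
    (h : IsElementary ρ E S ord e (goalValue ρ q)) : ord q < ord e := by
  generalize hv : goalValue ρ q = v at h
  cases h with
  | const c => exact absurd hv (goalValue_ne_eConst (hE.root_notMem q hq) c)
  | gamma a _ => exact absurd hv (goalValue_ne_gammaValue (hE.root_notMem q hq)
      (hE.not_isDiag q hq) a)
  | goal e' he' hlt =>
    rwa [(goalValue_inj (hE.root_notMem q hq) (hE.root_notMem e' he')).1 hv]

end IsElementary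

namespace Completes

/-- Removing an end from a goal leaves a value `Γ_a`, so the other summand of the goal can only
be an earlier goal at the same end. -/
lemma exists_goal_of_apply_eq_zero (hE : IsPendant ρ M E) (hv : ∀ a ≠ ρ, v ≠ gammaValue ρ a)
    (h : Completes ρ E S ord v s(c, d)) (hvc : v c = 0) :
    ∃ e' ∈ E, c ∈ e' ∧ ord e' < ord s(c, d) ∧ goalValue ρ s(c, d) = v + goalValue ρ e' := by
  obtain ⟨u, hu, hsum⟩ := h.exists_add
  have hρ := hE.root_notMem _ h.mem
  have hd := hE.not_isDiag _ h.mem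
  simp only [Sym2.mem_iff, not_or, Sym2.mk_isDiag_iff] at hρ hd
  have huc : u c = 1 := by
    have := congrFun hsum c
    rw [goalValue_apply_of_ne (Ne.symm hρ.1)] at this
    simpa [hvc] using this.symm
  obtain rfl | hcS | ⟨e', he', hce', hlt, rfl⟩ := hu.eq_or_mem_or_exists_goal (Ne.symm hρ.1) huc
  · rw [goalValue_mk hρ.1 hρ.2 hd, add_right_comm] at hsum
    exact absurd (add_right_cancel hsum).symm (hv d (Ne.symm hρ.2))
  · exact absurd (Sym2.mem_mk_left c d) (h.notMem_of_mem c hcS)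
  · exact ⟨e', he', hce', hlt, hsum⟩

lemma apply_leaf (hE : IsPendant ρ M E) (hv : ∀ a ≠ ρ, v ≠ gammaValue ρ a)
    (h : Completes ρ E S ord v e) (hc : c ∈ e) (hcM : c ∉ M) : v c = 1 := by
  refine Fin.eq_one_of_ne_zero _ fun hvc => ?_
  obtain ⟨d, rfl⟩ := hc
  obtain ⟨e', he', hce', hlt, -⟩ := h.exists_goal_of_apply_eq_zero hE hv hvc
  rw [hE.eq_of_leaf c hcM e' he' _ h.mem hce' (Sym2.mem_mk_left c d)] at hlt
  exact hlt.false

lemma exists_goal_of_notMem (h : Completes ρ E S ord v q) (hc : c ≠ ρ) (hd : d ≠ ρ) (hcd : c ≠ d)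
    (hvc : v c = 1) (hvd : v d = 1) (hcq : c ∉ q) (hdq : d ∉ q) (hcS : c ∉ S) :
    ord s(c, d) < ord q ∧ goalValue ρ q = v + goalValue ρ s(c, d) := by
  obtain ⟨u, hu, hsum⟩ := h.exists_add
  have huc := apply_eq_one_of_notMem hsum hc hcq hvc
  have hud := apply_eq_one_of_notMem hsum hd hdq hvd
  obtain rfl | hcS' | ⟨e', he', hce', hlt, rfl⟩ := hu.eq_or_mem_or_exists_goal hc huc
  · simp [eConst_apply, hcd.symm] at hud
  · exact absurd hcS' hcS
  · have hde' : d ∈ e' := by simpa [goalValue_apply_of_ne hd] using hud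
    obtain rfl : e' = s(c, d) := (Sym2.mem_and_mem_iff hcd).1 ⟨hce', hde'⟩
    exact ⟨hlt, hsum⟩

/-- Once one completed edge has a leaf `c`, every other one is the sum of `v` and either `e_c` or
the goal of that edge, and the coordinate `ρ` tells which. -/
lemma eq_of_leaf (hE : IsPendant ρ M E) (hv : ∀ a ≠ ρ, v ≠ gammaValue ρ a)
    (h : Completes ρ E S ord v e) (hc : c ∈ e) (hcM : c ∉ M) (hq : Completes ρ E S ord v q)
    (hqe : q ≠ e) (hq' : Completes ρ E S ord v e') (hqe' : e' ≠ e) : q = e' := by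
  have hcρ : c ≠ ρ := fun hcρ => hE.root_notMem e h.mem (hcρ ▸ hc)
  have key {q} (hq : Completes ρ E S ord v q) (hqe : q ≠ e) :
      goalValue ρ q = v + if v ρ = 1 then eConst c else goalValue ρ e := by
    have hcq : c ∉ q := fun hcq => hqe (hE.eq_of_leaf c hcM q hq.mem e h.mem hcq hc)
    obtain ⟨u, hu, hsum⟩ := hq.exists_add
    have huc := apply_eq_one_of_notMem hsum hcρ hcq (h.apply_leaf hE hv hc hcM)
    have hroot := congrFun hsum ρ
    obtain rfl | hcS | ⟨e', he', hce', -, rfl⟩ := hu.eq_or_mem_or_exists_goal hcρ huc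
    · simp_all [eConst_apply, hcρ.symm]
    · exact absurd hc (h.notMem_of_mem c hcS)
    · obtain rfl := hE.eq_of_leaf c hcM e' he' e h.mem hce' hc
      simp_all
  exact (goalValue_inj (hE.root_notMem q hq.mem) (hE.root_notMem e' hq'.mem)).1
    ((key hq hqe).trans (key hq' hqe').symm)

lemma exists_pair_forall_isAnchor_of_leaf (hE : IsPendant ρ M E)
    (hv : ∀ a ≠ ρ, v ≠ gammaValue ρ a) (h : Completes ρ E S ord v e) (hc : c ∈ e) (hcM : c ∉ M) :
    ∃ c d, ∀ q, Completes ρ E S ord v q → IsAnchor M q c ∨ IsAnchor M q d := by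
  by_cases! hq : ∃ q, Completes ρ E S ord v q ∧ q ≠ e
  · obtain ⟨q, hq, hqe⟩ := hq
    obtain ⟨d, hd⟩ := exists_isAnchor M q
    refine ⟨c, d, fun q' hq' => ?_⟩
    by_cases hqe' : q' = e
    · exact .inl (hqe' ▸ isAnchor_of_notMem hc hcM)
    · exact .inr (h.eq_of_leaf hE hv hc hcM hq hqe hq' hqe' ▸ hd)
  · exact ⟨c, c, fun q hq' => .inl (hq q hq' ▸ isAnchor_of_notMem hc hcM)⟩

/-- Here `v` is the sum of two goals with a common end, so `v = e_y + e_z`; a goal avoiding `y` and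
`z` would be the sum of `v` and the goal of `s(y, z)`, which is `e_ρ`. -/
lemma exists_pair_forall_mem_of_apply_eq_zero (hE : IsPendant ρ M E)
    (hv : ∀ a ≠ ρ, v ≠ gammaValue ρ a) (h : Completes ρ E S ord v s(c, d)) (hvc : v c = 0) :
    ∃ y z, ∀ q, Completes ρ E S ord v q → y ∈ q ∨ z ∈ q := by
  obtain ⟨e', he', ⟨z, rfl⟩, hlt, hsum⟩ := h.exists_goal_of_apply_eq_zero hE hv hvc
  have hρ := hE.root_notMem _ h.mem
  have hρ' := hE.root_notMem _ he'
  have hd := hE.not_isDiag _ h.mem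
  have hd' := hE.not_isDiag _ he'
  simp only [Sym2.mem_iff, not_or, Sym2.mk_isDiag_iff] at hρ hρ' hd hd'
  have hdz : d ≠ z := by rintro rfl; exact hlt.false
  obtain rfl : v = eConst d + eConst z := by
    rw [goalValue_mk hρ.1 hρ.2 hd, goalValue_mk hρ'.1 hρ'.2 hd'] at hsum
    linear_combination -hsum - ZModModule.add_self (eConst z)
  refine ⟨d, z, fun q hq => ?_⟩
  by_contra! hmiss
  have hdS : d ∉ S := fun hdS => h.notMem_of_mem d hdS (Sym2.mem_mk_right c d)
  obtain ⟨-, hsum'⟩ := hq.exists_goal_of_notMem (Ne.symm hρ.2) (Ne.symm hρ'.2) hdz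
    (by simp [eConst_apply, hdz]) (by simp [eConst_apply, hdz.symm]) hmiss.1 hmiss.2 hdS
  refine goalValue_ne_eConst (hE.root_notMem q hq.mem) ρ ?_
  rw [hsum', goalValue_mk hρ.2 hρ'.2 hdz]
  linear_combination ZModModule.add_self (eConst d) + ZModModule.add_self (eConst z)

/-- If `v` does not vanish at the ends of a completed edge `s(c, d)`, a completed edge `q` avoiding
both of them satisfies `q = v + s(c, d)`; so each of the two goals would come before the other. -/
lemma mem_or_mem_of_apply_eq_one (hE : IsPendant ρ M E) (h : Completes ρ E S ord v s(c, d))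
    (hvc : v c = 1) (hvd : v d = 1) (hq : Completes ρ E S ord v q) : c ∈ q ∨ d ∈ q := by
  have hρ := hE.root_notMem _ h.mem
  have hcd := hE.not_isDiag _ h.mem
  simp only [Sym2.mem_iff, not_or, Sym2.mk_isDiag_iff] at hρ hcd
  by_contra! hmiss
  have hcS : c ∉ S := fun hcS => h.notMem_of_mem c hcS (Sym2.mem_mk_left c d)
  obtain ⟨hlt, hsum⟩ := hq.exists_goal_of_notMem (Ne.symm hρ.1) (Ne.symm hρ.2) hcd hvc hvd
    hmiss.1 hmiss.2 hcS
  obtain ⟨u, hu, hsum'⟩ := h.exists_add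
  obtain rfl : u = goalValue ρ q := by
    linear_combination -hsum - hsum' - ZModModule.add_self v
  exact hlt.asymm (hu.goal_lt hE hq.mem)

lemma exists_pair_forall_mem (hE : IsPendant ρ M E) (hv : ∀ a ≠ ρ, v ≠ gammaValue ρ a) :
    ∃ c d, ∀ q, Completes ρ E S ord v q → c ∈ q ∨ d ∈ q := by
  by_cases! hzero : ∃ x y, Completes ρ E S ord v s(x, y) ∧ v x = 0
  · obtain ⟨x, y, h, hvx⟩ := hzero
    exact h.exists_pair_forall_mem_of_apply_eq_zero hE hv hvx
  by_cases! hne : ∃ e, Completes ρ E S ord v e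
  · obtain ⟨e, h⟩ := hne
    induction e with | _ a b
    exact ⟨a, b, fun q => h.mem_or_mem_of_apply_eq_one hE
      (Fin.eq_one_of_ne_zero _ (hzero a b h))
      (Fin.eq_one_of_ne_zero _ (hzero b a (Sym2.eq_swap ▸ h)))⟩
  · exact ⟨ρ, ρ, fun q hq => absurd hq (hne q)⟩

lemma exists_pair_forall_isAnchor (hE : IsPendant ρ M E) (hv : ∀ a ≠ ρ, v ≠ gammaValue ρ a) :
    ∃ c d, ∀ q, Completes ρ E S ord v q → IsAnchor M q c ∨ IsAnchor M q d := by
  by_cases! hleaf : ∃ e, Completes ρ E S ord v e ∧ ∃ c ∈ e, c ∉ M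
  · obtain ⟨e, h, c, hc, hcM⟩ := hleaf
    exact h.exists_pair_forall_isAnchor_of_leaf hE hv hc hcM
  · obtain ⟨c, d, hcd⟩ := exists_pair_forall_mem (S := S) (ord := ord) hE hv
    exact ⟨c, d, fun q hq => (hcd q hq).imp (isAnchor_of_forall_mem · (hleaf q hq))
      (isAnchor_of_forall_mem · (hleaf q hq))⟩

end Completes

/-- Each vector of `T` needs two anchors for the goals it completes with an elementary argument, and
one more for its contribution to the dimension of the span of `T`. -/
lemma exists_card_le_three_mul_forall_isAnchor (hE : IsPendant ρ M E) (T : Finset (C → ZMod 2))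
    (hT : ∀ v ∈ T, ∀ a ≠ ρ, v ≠ gammaValue ρ a) :
    ∃ X : Finset C, X.card ≤ 3 * T.card ∧ ∀ e ∈ E, (∀ a ∈ S, a ∉ e) →
      ∀ v ∈ T, ∀ u, (u ∈ T ∨ IsElementary ρ E S ord e u) → goalValue ρ e = v + u →
        ∃ c ∈ X, IsAnchor M e c := by
  obtain ⟨X, hXcard, hX⟩ := exists_card_le_finrank_forall_isAnchor (M := M) hE.root_notMem
    (Submodule.span (ZMod 2) (T : Set (C → ZMod 2)))
  have hpair (v : C → ZMod 2) (hv : v ∈ T) :=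
    Completes.exists_pair_forall_isAnchor (S := S) (ord := ord) hE (hT v hv)
  have : Nonempty C := ⟨ρ⟩
  choose! c d hcd using hpair
  refine ⟨X ∪ T.biUnion fun v => {c v, d v}, ?_, fun e he heS v hv u hu hsum => ?_⟩
  · have hspan := hXcard.trans (finrank_span_finset_le_card T)
    have hbi := Finset.card_biUnion_le_card_mul T (fun v => ({c v, d v} : Finset C)) 2
      fun v _ => Finset.card_le_two
    grind [Finset.card_union_le]
  · simp only [Finset.mem_union, Finset.mem_biUnion, Finset.mem_insert, Finset.mem_singleton]
    obtain hu | hu := hu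
    · obtain ⟨x, hx, hex⟩ := hX e he
        (hsum ▸ add_mem (Submodule.subset_span hv) (Submodule.subset_span hu))
      exact ⟨x, .inl hx, hex⟩
    · obtain h | h := hcd v hv e ⟨he, heS, u, hu, hsum⟩
      · exact ⟨c v, .inr ⟨v, hv, .inl rfl⟩, h⟩
      · exact ⟨d v, .inr ⟨v, hv, .inr rfl⟩, h⟩

end Completions

section Evaluation

variable {C : Type}

lemma foldl_concat_getElem? {α β : Type*} (f : List β → α → β) (l : List α) (i : ℕ) :
    (l.foldl (fun env a => env ++ [f env a]) [])[i]? =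
      l[i]?.map (f ((l.foldl (fun env a => env ++ [f env a]) []).take i)) := by
  have hlen (l : List α) : (l.foldl (fun env a => env ++ [f env a]) []).length = l.length := by
    induction l using List.reverseRecOn with simp_all
  induction l using List.reverseRecOn with
  | nil => simp
  | append_singleton l a ih =>
    obtain h | rfl | h := lt_trichotomy i l.length
    · simpa [List.take_append_of_le_length, hlen, h, h.le] using ih
    · simp [hlen]
    · rw [List.getElem?_eq_none, List.getElem?_eq_none] <;> simp [hlen] <;> lia

namespace MultiSLP

lemma costM_eq_sum (P : MultiSLP C) :
    P.costM = ∑ i ∈ Finset.range P.stmts.length, ((P.stmts.getD i []).length + 1) := by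
  simp [costM, Finset.sum_range, ← Fin.sum_univ_fun_getElem]

lemma le_costM_of_injOn {ι : Type*} (P : MultiSLP C) (s : Finset ι) (pos : ι → ℕ)
    (hpos : ∀ i ∈ s, pos i < P.stmts.length) (hinj : Set.InjOn pos s) :
    3 * s.card + {i ∈ s | (P.stmts.getD (pos i) []).length ≠ 2}.card +
      3 * (Finset.range P.stmts.length \ s.image pos).card ≤ P.costM := by
  have two_le (k : ℕ) (hk : k < P.stmts.length) : 2 ≤ (P.stmts.getD k []).length := by
    rw [List.getD_eq_getElem _ _ hk]
    exact P.arity _ (List.getElem_mem hk)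
  have hsub : s.image pos ⊆ Finset.range P.stmts.length := by grind
  rw [costM_eq_sum, ← Finset.sum_sdiff hsub, Finset.sum_image hinj, Finset.card_filter, add_comm]
  refine add_le_add ?_ ?_
  · rw [mul_comm, ← smul_eq_mul]
    exact Finset.card_nsmul_le_sum _ _ 3 fun k hk => by grind
  · rw [mul_comm, ← smul_eq_mul, ← Finset.sum_const, ← Finset.sum_add_distrib]
    exact Finset.sum_le_sum fun i hi => by grind

variable [DecidableEq C]

lemma value_eq_sum (P : MultiSLP C) (i : ℕ) :
    P.value i = ((P.stmts.getD i []).map (Term.eval P.envList)).sum := by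
  have eval_take {t : Term C} (ht : ∀ j, t = .var j → j < i) :
      t.eval (P.envList.take i) = t.eval P.envList := by
    cases t with
    | const c => rfl
    | var j => simp [Term.eval, List.getD_eq_getElem?_getD, ht j rfl]
  rw [value, List.getD_eq_getElem?_getD, envList, foldl_concat_getElem?, ← envList]
  by_cases hi : i < P.stmts.length
  · have hwf := P.wfStmts i hi
    simp only [List.getD_eq_getElem _ _ hi, List.getElem?_eq_getElem hi, Option.map_some,
      Option.getD_some] at hwf ⊢
    exact congrArg List.sum (List.map_congr_left fun t ht => eval_take (hwf t ht))
  · simp [List.getElem?_eq_none (not_lt.1 hi)]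

lemma exists_value_eq_of_mem_result (P : MultiSLP C) {v : C → ZMod 2} (hv : v ∈ P.result)
    (hconst : ∀ c, v ≠ eConst c) : ∃ k < P.stmts.length, P.value k = v := by
  obtain ⟨t, ht, rfl⟩ := List.mem_map.1 hv
  cases t with
  | const c => exact absurd rfl (hconst c)
  | var j => exact ⟨j, P.wfRet _ ht j rfl, rfl⟩

end MultiSLP
end Evaluation

section LowerBound

variable {C : Type} [DecidableEq C] {ρ : C} {M : Set C} {e : Sym2 C}

lemma exists_gammaValue_cover (ρ : C) (K : Finset (C → ZMod 2)) :
    ∃ (S : Finset C) (T : Finset (C → ZMod 2)), S.card + T.card ≤ K.card ∧ ρ ∉ S ∧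
      (∀ v ∈ T, ∀ a ≠ ρ, v ≠ gammaValue ρ a) ∧
      ∀ v ∈ K, (∃ a ∈ S, v = gammaValue ρ a) ∨ v ∈ T := by
  classical
  have : Nonempty C := ⟨ρ⟩
  choose! a ha using fun (v : C → ZMod 2) (h : ∃ a ≠ ρ, v = gammaValue ρ a) => h
  refine ⟨{v ∈ K | ∃ a ≠ ρ, v = gammaValue ρ a}.image a, {v ∈ K | ¬ ∃ a ≠ ρ, v = gammaValue ρ a},
    ?_, ?_, ?_, fun v hv => ?_⟩
  · have := K.card_filter_add_card_filter_not (fun v => ∃ a ≠ ρ, v = gammaValue ρ a)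
    grind [Finset.card_image_le]
  · grind
  · grind
  · by_cases h : ∃ a ≠ ρ, v = gammaValue ρ a
    · exact .inl ⟨a v, Finset.mem_image_of_mem _ (by grind), (ha v h).2⟩
    · exact .inr (by grind)

namespace MultiSLP

variable (P : MultiSLP C)

lemma eval_mem_or_isElementary {E : Set (Sym2 C)} {S : Set C} {T : Set (C → ZMod 2)}
    {pos : Sym2 C → ℕ} (hpos : ∀ e ∈ E, pos e < P.stmts.length ∧ P.value (pos e) = goalValue ρ e)
    (hST : ∀ k < P.stmts.length, k ∉ pos '' E →
      (∃ a ∈ S, P.value k = gammaValue ρ a) ∨ P.value k ∈ T)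
    (he : e ∈ E) {t : Term C} (ht : t ∈ P.stmts.getD (pos e) []) :
    t.eval P.envList ∈ T ∨ IsElementary ρ E S pos e (t.eval P.envList) := by
  cases t with
  | const c => exact .inr (.const c)
  | var k =>
    have hlt : k < pos e := P.wfStmts _ (hpos e he).1 _ ht k rfl
    change P.value k ∈ T ∨ IsElementary ρ E S pos e (P.value k)
    by_cases hk : k ∈ pos '' E
    · obtain ⟨e', he', rfl⟩ := hk
      rw [(hpos e' he').2]
      exact .inr (.goal e' he' hlt)
    · obtain ⟨a, ha, hka⟩ | hkT := hST k (hlt.trans (hpos e he).1) hk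
      · exact .inr (hka ▸ .gamma a ha)
      · exact .inl hkT

/-- The edges in `U` are those whose goal has at least three arguments. -/
lemma exists_card_le_costM {E : Finset (Sym2 C)} (hE : IsPendant ρ M E)
    (hgoal : ∀ e ∈ E, goalValue ρ e ∈ P.result) :
    ∃ (S X : Finset C) (U : Finset (Sym2 C)),
      3 * E.card + U.card + 3 * S.card + X.card ≤ P.costM ∧
      ∀ e ∈ E, e ∉ U → (∃ a ∈ S, a ∈ e) ∨ ∃ c ∈ X, IsAnchor M e c := by
  classical
  choose! pos hpos using fun e he =>
    P.exists_value_eq_of_mem_result (hgoal e he) (goalValue_ne_eConst (hE.root_notMem e he))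
  have hinj : Set.InjOn pos E := fun e he e' he' h =>
    (goalValue_inj (hE.root_notMem e he) (hE.root_notMem e' he')).1
      ((hpos e he).2.symm.trans (h ▸ (hpos e' he').2))
  have hcost := P.le_costM_of_injOn E pos (fun e he => (hpos e he).1) hinj
  set K := Finset.range P.stmts.length \ E.image pos
  obtain ⟨S, T, hcard, hρS, hT, hST⟩ := exists_gammaValue_cover ρ (K.image P.value)
  obtain ⟨X, hXcard, hX⟩ :=
    exists_card_le_three_mul_forall_isAnchor (S := S) (ord := pos) hE T hT
  refine ⟨S, X, {e ∈ E | (P.stmts.getD (pos e) []).length ≠ 2}, ?_, fun e he heU => ?_⟩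
  · have := Finset.card_image_le (s := K) (f := P.value)
    lia
  · obtain ⟨t, t', hstmt⟩ : ∃ t t', P.stmts.getD (pos e) [] = [t, t'] := by
      simpa [he, List.length_eq_two] using heU
    have hsum : goalValue ρ e = t.eval P.envList + t'.eval P.envList := by
      rw [← (hpos e he).2, value_eq_sum, hstmt]
      simp
    by_cases! heS : ∃ a ∈ S, a ∈ e
    · exact .inl heS
    have harg {t₀} (ht₀ : t₀ ∈ [t, t']) :=
      P.eval_mem_or_isElementary (E := E) (S := S) (T := T) hpos (by grind) he (hstmt ▸ ht₀)
    have ht' := harg (t₀ := t') (by simp)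
    obtain htT | ht := harg (t₀ := t) (by simp)
    · exact .inr (hX e he heS _ htT _ ht' hsum)
    obtain ht'T | ht' := ht'
    · exact .inr (hX e he heS _ ht'T _ (.inr ht) (add_comm (t.eval _) _ ▸ hsum))
    · exact absurd hsum (goalValue_ne_add_of_isElementary hE hρS he heS ht ht')

end MultiSLP
end LowerBound

section Exchange

variable {C : Type} {ρ : C} {M : Set C} {E U : Finset (Sym2 C)} {S X Z : Finset C}

/-- Every vertex of `M` has two leaves outside `M`, like the local nodes `λ_a`, `μ_a` of a node `a`
in `G_modif`. -/
def HasTwoLeaves (M : Set C) (E : Set (Sym2 C)) : Prop :=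
  ∀ a ∈ M, ∃ x ∉ M, ∃ y ∉ M, x ≠ y ∧ s(a, x) ∈ E ∧ s(a, y) ∈ E

open scoped Classical in
lemma IsPendant.card_filter_exists_leaf_le (hE : IsPendant ρ M E) (A : Finset C) :
    {e ∈ E | ∃ c ∈ A, c ∉ M ∧ c ∈ e}.card ≤ {c ∈ A | c ∉ M}.card := by
  refine Finset.card_le_card_of_forall_subsingleton (fun e c => c ∈ e) (by grind) fun c hc => ?_
  rintro e ⟨he, hce⟩ e' ⟨he', hce'⟩
  exact hE.eq_of_leaf c (by grind) e (by grind) e' (by grind) hce hce'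

open scoped Classical in
lemma HasTwoLeaves.two_mul_card_le (h : HasTwoLeaves M E) (hZ : ∀ a ∈ Z, a ∈ M) :
    2 * Z.card ≤ {e ∈ E | ∃ a ∈ Z, ∃ c ∉ M, e = s(a, c)}.card := by
  choose! x hx y hy hxy hxE hyE using h
  have hcard : (Z.biUnion fun a => {s(a, x a), s(a, y a)}).card = Z.card * 2 := by
    rw [Finset.card_biUnion, Finset.sum_const_nat fun a ha => Finset.card_pair ?_]
    · exact fun h => hxy a (hZ a ha) (Sym2.congr_right.1 h)
    · intro a ha b hb hab
      simp only [Function.onFun, Finset.disjoint_left, Finset.mem_insert, Finset.mem_singleton]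
      grind
  rw [mul_comm, ← hcard]
  refine Finset.card_le_card fun e he => ?_
  simp only [Finset.mem_biUnion, Finset.mem_insert, Finset.mem_singleton] at he
  obtain ⟨a, ha, rfl | rfl⟩ := he
  · exact Finset.mem_filter.2 ⟨hxE a (hZ a ha), a, ha, x a, hx a (hZ a ha), rfl⟩
  · exact Finset.mem_filter.2 ⟨hyE a (hZ a ha), a, ha, y a, hy a (hZ a ha), rfl⟩

/-- Replacing an anchor `a ∈ M` by a variable `Γ_a` costs 2 more, and it takes care of the two leaf
edges at `a`, which were not anchored at `a`. -/
lemma exists_gamma_card_le (hE : IsPendant ρ M E) (hleaf : HasTwoLeaves M E)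
    (hcover : ∀ e ∈ E, e ∉ U → (∃ a ∈ S, a ∈ e) ∨ ∃ c ∈ X, IsAnchor M e c) :
    ∃ D : Finset C, (∀ a ∈ D, a ∈ M) ∧
      ∀ V ⊆ E, (∀ e ∈ V, ∀ a ∈ D, a ∉ e) →
        3 * D.card + V.card ≤ U.card + 3 * S.card + X.card := by
  classical
  set D := {a ∈ S ∪ X | a ∈ M}
  set Z := {a ∈ X \ S | a ∈ M}
  refine ⟨D, by grind, fun V hVE hV => ?_⟩
  set W := {e ∈ E | ∃ a ∈ Z, ∃ c ∉ M, e = s(a, c)}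
  have hVW : Disjoint V W := by
    refine Finset.disjoint_left.2 fun e heV heW => ?_
    obtain ⟨-, a, ha, c, -, rfl⟩ := Finset.mem_filter.1 heW
    exact hV _ heV a (by grind) (Sym2.mem_mk_left a c)
  have hsub : V ∪ W ⊆ U ∪ {e ∈ E | ∃ c ∈ S ∪ X, c ∉ M ∧ c ∈ e} := by
    intro e he
    have heE : e ∈ E := by grind
    by_cases heU : e ∈ U
    · grind
    suffices ∃ c ∈ S ∪ X, c ∉ M ∧ c ∈ e by grind
    obtain heV | heW := Finset.mem_union.1 he
    · grind [IsAnchor]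
    · obtain ⟨a, haZ, c, hc, rfl⟩ := (Finset.mem_filter.1 heW).2
      grind [IsAnchor]
  have hle := Finset.card_le_card hsub
  rw [Finset.card_union_of_disjoint hVW] at hle
  have := hE.card_filter_exists_leaf_le (S ∪ X)
  have := hleaf.two_mul_card_le (Z := Z) (by grind)
  have := Finset.card_union_le U {e ∈ E | ∃ c ∈ S ∪ X, c ∉ M ∧ c ∈ e}
  have card_split (p : C → Prop) [DecidablePred p] :
      {a ∈ S ∪ X | p a}.card = {a ∈ S | p a}.card + {a ∈ X \ S | p a}.card := by
    rw [← Finset.union_sdiff_self_eq_union, Finset.filter_union,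
      Finset.card_union_of_disjoint (Finset.disjoint_filter_filter Finset.disjoint_sdiff)]
  have hD : D.card = {a ∈ S | a ∈ M}.card + Z.card := card_split (· ∈ M)
  have := card_split (· ∉ M)
  have := S.card_filter_add_card_filter_not (· ∈ M)
  have := (X \ S).card_filter_add_card_filter_not (· ∈ M)
  have := Finset.card_le_card (Finset.sdiff_subset (s := X) (t := S))
  lia

end Exchange

section GammaProgram

variable {C : Type} [DecidableEq C] {ρ : C} {D : List C} {gl : List (C × C)} {i k : ℕ}

/-- The statement of the goal of the edge `s(p.1, p.2)` when variable `i` is `Γ_a` for the `i`-th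
entry `a` of `D`. -/
def goalStmt (ρ : C) (D : List C) (p : C × C) : List (Term C) :=
  if p.1 ∈ D then [.var (D.idxOf p.1), .const p.2]
  else if p.2 ∈ D then [.var (D.idxOf p.2), .const p.1]
  else [.const ρ, .const p.1, .const p.2]

lemma goalStmt_cases (ρ : C) (D : List C) (p : C × C) :
    (∃ k, ∃ hk : k < D.length, ∃ x, goalStmt ρ D p = [.var k, .const x] ∧
      gammaValue ρ D[k] + eConst x = eConst ρ + eConst p.1 + eConst p.2) ∨
    goalStmt ρ D p = [.const ρ, .const p.1, .const p.2] := by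
  by_cases h₁ : p.1 ∈ D
  · exact .inl ⟨D.idxOf p.1, List.idxOf_lt_length_iff.2 h₁, p.2, by simp [goalStmt, h₁],
      by simp [gammaValue]⟩
  by_cases h₂ : p.2 ∈ D
  · exact .inl ⟨D.idxOf p.2, List.idxOf_lt_length_iff.2 h₂, p.1, by simp [goalStmt, h₁, h₂],
      by simp [gammaValue, add_right_comm]⟩
  · exact .inr (by simp [goalStmt, h₁, h₂])

lemma length_goalStmt (ρ : C) (D : List C) (p : C × C) :
    (goalStmt ρ D p).length = 2 + if ∀ a ∈ D, a ∉ s(p.1, p.2) then 1 else 0 := by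
  by_cases h₁ : p.1 ∈ D
  · rw [if_neg fun h => h _ h₁ (Sym2.mem_mk_left _ _)]
    simp [goalStmt, h₁]
  by_cases h₂ : p.2 ∈ D
  · rw [if_neg fun h => h _ h₂ (Sym2.mem_mk_right _ _)]
    simp [goalStmt, h₁, h₂]
  · rw [if_pos fun a ha => by grind]
    simp [goalStmt, h₁, h₂]

/-- The program that first computes `Γ_a` for all `a` in `D`, then the goals of all edges
`s(p.1, p.2)` with `p` in `gl`. -/
def gammaProgram (ρ : C) (D : List C) (gl : List (C × C)) : MultiSLP C where
  stmts := D.map (fun a => [.const ρ, .const a]) ++ gl.map (goalStmt ρ D)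
  ret := (List.range' D.length gl.length).map .var
  arity := by
    have := length_goalStmt ρ D
    grind
  wfStmts i hi t ht j htj := by
    subst htj
    obtain h | h := lt_or_ge i D.length
    · simp [List.getElem?_append_left (show i < (D.map _).length by simpa), h] at ht
    · obtain ⟨k, rfl⟩ := Nat.exists_eq_add_of_le h
      have hk : k < gl.length := by simpa using hi
      obtain ⟨l, hl, x, hstmt, -⟩ | hstmt := goalStmt_cases ρ D gl[k]
      · simp [hk, hstmt] at ht
        grind
      · simp [hk, hstmt] at ht
  wfRet := by grind

namespace gammaProgram

lemma stmts_gamma (gl : List (C × C)) (hi : i < D.length) :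
    (gammaProgram ρ D gl).stmts.getD i [] = [.const ρ, .const D[i]] := by
  rw [gammaProgram, List.getD_append _ _ _ _ (by simpa)]
  simp [hi]

lemma stmts_goal (D : List C) (hk : k < gl.length) :
    (gammaProgram ρ D gl).stmts.getD (D.length + k) [] = goalStmt ρ D gl[k] := by
  simp [gammaProgram, hk]

lemma length_stmts : (gammaProgram ρ D gl).stmts.length = D.length + gl.length := by
  simp [gammaProgram]

lemma var_mem_ret_iff :
    .var i ∈ (gammaProgram ρ D gl).ret ↔ D.length ≤ i ∧ i < D.length + gl.length := by
  simp [gammaProgram]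

lemma value_gamma (gl : List (C × C)) (hi : i < D.length) :
    (gammaProgram ρ D gl).value i = gammaValue ρ D[i] := by
  rw [MultiSLP.value_eq_sum, stmts_gamma gl hi]
  simp [Term.eval, gammaValue]

lemma value_goal (D : List C) (hk : k < gl.length) :
    (gammaProgram ρ D gl).value (D.length + k) =
      eConst ρ + eConst gl[k].1 + eConst gl[k].2 := by
  rw [MultiSLP.value_eq_sum, stmts_goal D hk]
  obtain ⟨l, hl, x, hstmt, hsum⟩ | hstmt := goalStmt_cases ρ D gl[k]
  · rw [hstmt, ← hsum, ← value_gamma gl hl]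
    simp [Term.eval, MultiSLP.value]
  · simp [hstmt, Term.eval, add_assoc]

lemma result_eq (ρ : C) (D : List C) (gl : List (C × C)) :
    (gammaProgram ρ D gl).result = gl.map fun p => eConst ρ + eConst p.1 + eConst p.2 := by
  refine List.ext_getElem (by simp [MultiSLP.result, gammaProgram]) fun k _ hk => ?_
  rw [List.getElem_map, ← value_goal D (by simpa using hk)]
  simp [MultiSLP.result, gammaProgram, Term.eval, MultiSLP.value]

lemma costM_eq (ρ : C) (D : List C) (gl : List (C × C)) :
    (gammaProgram ρ D gl).costM = 3 * D.length + 3 * gl.length +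
      (gl.countP fun p => ∀ a ∈ D, a ∉ s(p.1, p.2)) := by
  have hgl : ((gl.map (goalStmt ρ D)).map fun args => args.length + 1).sum =
      3 * gl.length + gl.countP fun p => ∀ a ∈ D, a ∉ s(p.1, p.2) := by
    induction gl with
    | nil => simp
    | cons p gl ih =>
      simp only [List.map_cons, List.sum_cons, ih, length_goalStmt, List.countP_cons,
        List.length_cons, decide_eq_true_eq]
      lia
  have hD : ((D.map fun a => [Term.const ρ, .const a]).map fun args => args.length + 1).sum =
      3 * D.length := by
    simp [Function.comp_def, mul_comm]
  rw [MultiSLP.costM, gammaProgram, List.map_append, List.sum_append, hD, hgl, add_assoc]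

lemma exists_temporal (hi : i < (gammaProgram ρ D gl).stmts.length)
    (hret : .var i ∉ (gammaProgram ρ D gl).ret) :
    ∃ a ∈ D, (gammaProgram ρ D gl).stmts.getD i [] = [.const ρ, .const a] := by
  have hiD : i < D.length := by grind [length_stmts, var_mem_ret_iff]
  exact ⟨D[i], List.getElem_mem hiD, stmts_gamma gl hiD⟩

lemma exists_goal (hret : .var i ∈ (gammaProgram ρ D gl).ret) :
    (∃ j < i, ∃ a ∈ D, ∃ x,
      (gammaProgram ρ D gl).stmts.getD j [] = [.const ρ, .const a] ∧
      (gammaProgram ρ D gl).stmts.getD i [] = [.var j, .const x]) ∨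
    ∃ x y, (gammaProgram ρ D gl).stmts.getD i [] = [.const ρ, .const x, .const y] := by
  obtain ⟨hDi, hi⟩ := var_mem_ret_iff.1 hret
  obtain ⟨k, rfl⟩ := Nat.exists_eq_add_of_le hDi
  rw [stmts_goal D (by lia)]
  obtain ⟨j, hj, x, hstmt, -⟩ | hstmt := goalStmt_cases ρ D (gl[k]'(by lia))
  · exact .inl ⟨j, by lia, D[j], List.getElem_mem hj, x, stmts_gamma gl hj, hstmt⟩
  · exact .inr ⟨_, _, hstmt⟩

end gammaProgram
end GammaProgram

section Equivalence

variable {C : Type} [DecidableEq C] {ρ : C} {M : Set C} {gl : List (C × C)}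

lemma IsPendant.map_goalValue (hE : IsPendant ρ M {e | e ∈ gl.map fun p => s(p.1, p.2)}) :
    (gl.map fun p => s(p.1, p.2)).map (goalValue ρ) =
      gl.map fun p => eConst ρ + eConst p.1 + eConst p.2 := by
  rw [List.map_map, List.map_inj_left]
  intro p hp
  have hmem : s(p.1, p.2) ∈ gl.map fun p => s(p.1, p.2) := List.mem_map_of_mem hp
  have hρ := hE.root_notMem _ hmem
  have hd := hE.not_isDiag _ hmem
  simp only [Sym2.mem_iff, not_or, Sym2.mk_isDiag_iff] at hρ hd
  exact goalValue_mk hρ.1 hρ.2 hd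

lemma exists_gammaProgram_costM_le (hnodup : (gl.map fun p => s(p.1, p.2)).Nodup)
    (hE : IsPendant ρ M {e | e ∈ gl.map fun p => s(p.1, p.2)})
    (hleaf : HasTwoLeaves M {e | e ∈ gl.map fun p => s(p.1, p.2)}) (P : MultiSLP C)
    (hP : P.result = gl.map fun p => eConst ρ + eConst p.1 + eConst p.2) :
    ∃ D : List C, (∀ a ∈ D, a ∈ M) ∧ (gammaProgram ρ D gl).costM ≤ P.costM := by
  set edges := gl.map fun p => s(p.1, p.2)
  have hcoe : {e | e ∈ edges} = (edges.toFinset : Set (Sym2 C)) := by simp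
  rw [← hE.map_goalValue] at hP
  rw [hcoe] at hE hleaf
  obtain ⟨S, X, U, hcost, hcover⟩ := P.exists_card_le_costM hE fun e he =>
    hP ▸ List.mem_map_of_mem (List.mem_toFinset.1 he)
  obtain ⟨D, hDM, hD⟩ := exists_gamma_card_le hE hleaf hcover
  refine ⟨D.toList, by simpa using hDM, ?_⟩
  have hV := hD (edges.filter fun e => ∀ a ∈ D, a ∉ e).toFinset
    (by simp [List.toFinset_filter, Finset.filter_subset])
    fun e he => of_decide_eq_true (List.mem_filter.1 (List.mem_toFinset.1 he)).2
  rw [List.toFinset_card_of_nodup (hnodup.filter _), ← List.countP_eq_length_filter,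
    List.countP_map] at hV
  rw [List.toFinset_card_of_nodup hnodup, List.length_map] at hcost
  rw [gammaProgram.costM_eq]
  simp only [Function.comp_def, Finset.mem_toList, Finset.length_toList] at hV ⊢
  lia

theorem remove_cancellation_general (hnodup : (gl.map fun p => s(p.1, p.2)).Nodup)
    (hE : IsPendant ρ M {e | e ∈ gl.map fun p => s(p.1, p.2)})
    (hleaf : HasTwoLeaves M {e | e ∈ gl.map fun p => s(p.1, p.2)}) (P : MultiSLP C)
    (hP : P.result = gl.map fun p => eConst ρ + eConst p.1 + eConst p.2) :
    ∃ Q : MultiSLP C, Q.result = P.result ∧ Q.costM ≤ P.costM ∧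
      (∀ i, i < Q.stmts.length → .var i ∉ Q.ret →
        ∃ a ∈ M, Q.stmts.getD i [] = [.const ρ, .const a]) ∧
      (∀ i, i < Q.stmts.length → .var i ∈ Q.ret →
        (∃ j, j < i ∧ ∃ a ∈ M, ∃ x, Q.stmts.getD j [] = [.const ρ, .const a] ∧
          Q.stmts.getD i [] = [.var j, .const x]) ∨
        ∃ x y, Q.stmts.getD i [] = [.const ρ, .const x, .const y]) := by
  obtain ⟨D, hDM, hcost⟩ := exists_gammaProgram_costM_le hnodup hE hleaf P hP
  refine ⟨gammaProgram ρ D gl, (gammaProgram.result_eq ρ D gl).trans hP.symm, hcost, ?_, ?_⟩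
  · intro i hi hret
    obtain ⟨a, ha, h⟩ := gammaProgram.exists_temporal hi hret
    exact ⟨a, hDM a ha, h⟩
  · intro i _ hret
    obtain ⟨j, hj, a, ha, h⟩ | h := gammaProgram.exists_goal hret
    · exact .inl ⟨j, hj, a, hDM a ha, h⟩
    · exact .inr h

end Equivalence

section ModifiedGraph

variable {N : Type} {L : List (N × N)} {nodes : List N}

/-- The edges of `G_modif`, in the order of `targetValues`. -/
def modifEdges (L : List (N × N)) (nodes : List N) : List (Const N × Const N) :=
  L.map (Prod.map .node .node) ++ nodes.flatMap fun a => [(.node a, .lam a), (.node a, .mu a)]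

lemma targetValues_eq_map [DecidableEq N] (L : List (N × N)) (nodes : List N) :
    targetValues L nodes =
      (modifEdges L nodes).map fun p => eConst .rho + eConst p.1 + eConst p.2 := by
  simp [targetValues, modifEdges, List.map_flatMap]

lemma mem_map_modifEdges {e : Sym2 (Const N)} :
    (e ∈ (modifEdges L nodes).map fun p => s(p.1, p.2)) ↔
      (∃ p ∈ L, e = s(.node p.1, .node p.2)) ∨
      ∃ a ∈ nodes, e = s(.node a, .lam a) ∨ e = s(.node a, .mu a) := by
  simp only [modifEdges, List.map_append, List.map_map, List.map_flatMap, List.mem_append,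
    List.mem_map, List.mem_flatMap, List.map_cons, List.map_nil, List.mem_cons, List.not_mem_nil,
    or_false, Function.comp_apply, Prod.map_fst, Prod.map_snd, eq_comm]

lemma nodup_modifEdges (hL : (L.map fun p => s(p.1, p.2)).Nodup) (hnodes : nodes.Nodup) :
    ((modifEdges L nodes).map fun p => s(p.1, p.2)).Nodup := by
  simp only [modifEdges, List.map_append, List.map_map, List.map_flatMap]
  refine List.Nodup.append ?_ (List.nodup_flatMap.2 ⟨by simp, ?_⟩) ?_
  · have hinj : Function.Injective (Sym2.map (Const.node (N := N))) :=
      Sym2.map.injective fun a b h => Const.node.inj h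
    simpa [Function.comp_def] using hL.map hinj
  · refine hnodes.imp fun hab => ?_
    simp [Function.onFun, Ne.symm hab]
  · intro e he he'
    simp only [List.mem_map, List.mem_flatMap] at he he'
    grind

lemma isPendant_modifEdges (hL : ∀ p ∈ L, p.1 ≠ p.2) :
    IsPendant .rho (Set.range .node)
      {e | e ∈ (modifEdges L nodes).map fun p => s(p.1, p.2)} where
  root_notMem e he := by
    obtain ⟨p, -, rfl⟩ | ⟨a, -, rfl | rfl⟩ := mem_map_modifEdges.1 he <;> simp
  not_isDiag e he := by
    obtain ⟨p, hp, rfl⟩ | ⟨a, -, rfl | rfl⟩ := mem_map_modifEdges.1 he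
    · simpa using hL p hp
    all_goals simp
  eq_of_leaf c hc e he e' he' hce hce' := by
    obtain ⟨p, -, rfl⟩ | ⟨a, -, rfl | rfl⟩ := mem_map_modifEdges.1 he <;>
    obtain ⟨p', -, rfl⟩ | ⟨a', -, rfl | rfl⟩ := mem_map_modifEdges.1 he' <;>
    grind

lemma hasTwoLeaves_modifEdges (L : List (N × N)) (hnodes : ∀ a, a ∈ nodes) :
    HasTwoLeaves (Set.range .node)
      {e | e ∈ (modifEdges L nodes).map fun p => s(p.1, p.2)} := by
  rintro _ ⟨a, rfl⟩
  exact ⟨.lam a, by simp, .mu a, by simp, by simp,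
    mem_map_modifEdges.2 (.inr ⟨a, hnodes a, .inl rfl⟩),
    mem_map_modifEdges.2 (.inr ⟨a, hnodes a, .inr rfl⟩)⟩

end ModifiedGraph

/-- **Removing the XOR-cancellation (Lemma A6 of the appendix).**  Let `G` be a finite
simple graph with node set `N` and edge set `E` (enumerated without repetition by `L`;
`nodes` enumerates `N`) and let `P` be any MultiSLP equivalent to `P_G`.  Then there is
a MultiSLP `Q` equivalent to `P_G` such that `#_M(Q) ≤ #_M(P)`, every temporal
(non-returned) variable of `Q` is of the form `Γ_a ← ρ ⊕ a` for some node `a ∈ N`, and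
the defining statement of every returned goal variable `g` of `Q` has one of the two
forms `g ← Γ_a ⊕ x` (for some node `a` with `Γ_a` in `Q` and some constant `x`) or
`g ← ρ ⊕ x ⊕ y` (for constants `x, y`); in particular `Q` computes every goal without
using the XOR-cancellation law. -/
theorem remove_cancellation {N : Type} [Fintype N] [DecidableEq N]
    (G : SimpleGraph N) [DecidableRel G.Adj]
    (L : List (N × N)) (nodes : List N)
    (hnodesN : nodes.Nodup) (hnodesA : ∀ a : N, a ∈ nodes)
    (hLN : (L.map fun p => s(p.1, p.2)).Nodup)
    (hLadj : ∀ p ∈ L, G.Adj p.1 p.2)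
    (hLall : ∀ a b : N, G.Adj a b → s(a, b) ∈ L.map fun p => s(p.1, p.2))
    (P : MultiSLP (Const N)) (hP : P.result = targetValues L nodes) :
    ∃ Q : MultiSLP (Const N), Q.result = targetValues L nodes ∧ Q.costM ≤ P.costM ∧
      (∀ i, i < Q.stmts.length → Term.var i ∉ Q.ret →
        ∃ a : N, Q.stmts.getD i [] = [Term.const Const.rho, Term.const (Const.node a)]) ∧
      (∀ i, i < Q.stmts.length → Term.var i ∈ Q.ret →
        (∃ j, j < i ∧ ∃ (a : N) (x : Const N),
            Q.stmts.getD j [] = [Term.const Const.rho, Term.const (Const.node a)] ∧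
            Q.stmts.getD i [] = [Term.var j, Term.const x]) ∨
        (∃ x y : Const N,
            Q.stmts.getD i [] = [Term.const Const.rho, Term.const x, Term.const y])) := by
  rw [targetValues_eq_map] at hP ⊢
  simpa [hP] using remove_cancellation_general (nodup_modifEdges hLN hnodesN)
    (isPendant_modifEdges fun p hp => (hLadj p hp).ne) (hasTwoLeaves_modifEdges L hnodesA) P hP
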